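/- Let M_k(q) = \sum_{j=0}^{2k} (-1)^{j+k} q^{j(2k-j)+k}. Then M_k(q) equals the sum of weights of Dyck paths of length 2k in which each up step from height h has weight 1 or -q^{h+1}, each down step from height h has weight 1 or -q^h, and no two consecutive steps form an up-down pair both weighted 1. -/

import Mathlib

open Finset Polynomial
open scoped Classical

noncomputable section
/-- The value of a step: `+1` for an up step, `-1` for a down step. -/
def stepVal (b : Bool) : ℤ := if b then 1 else -1

/-- Height of the path after its first `i` steps. -/
def pathHeight {m : ℕ} (s : Fin m → Bool) (i : ℕ) : ℤ :=
  ∑ j : Fin m, if (j : ℕ) < i then stepVal (s j) else 0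

/-- A Dyck path: all partial sums nonnegative, final height `0`. -/
def IsDyck {m : ℕ} (s : Fin m → Bool) : Prop :=
  (∀ i : Fin m, 0 ≤ pathHeight s ((i : ℕ) + 1)) ∧ pathHeight s m = 0

/-- No up step weighted `1` immediately followed by a down step weighted `1`
(`w i = true` means the step `i` carries weight `1`). -/
def NoDouble11 {m : ℕ} (s w : Fin m → Bool) : Prop :=
  ∀ i j : Fin m, (j : ℕ) = (i : ℕ) + 1 →
    ¬(s i = true ∧ s j = false ∧ w i = true ∧ w j = true)

/-- The Gaussian binomial coefficient, as a polynomial in `X`. -/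
def gaussBinom : ℕ → ℕ → Polynomial ℤ
  | _, 0 => 1
  | 0, _ + 1 => 0
  | n + 1, h + 1 => X ^ (h + 1) * gaussBinom n (h + 1) + gaussBinom n h

lemma gaussBinom_zero_right (n : ℕ) : gaussBinom n 0 = 1 := by
  cases n <;> rfl

lemma gaussBinom_succ_succ (n h : ℕ) :
    gaussBinom (n + 1) (h + 1) = X ^ (h + 1) * gaussBinom n (h + 1) + gaussBinom n h := rfl

lemma gaussBinom_eq_zero {n h : ℕ} (hn : n < h) : gaussBinom n h = 0 := by
  induction n generalizing h with
  | zero =>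
    obtain ⟨h, rfl⟩ : ∃ l, h = l + 1 := ⟨h - 1, by omega⟩
    rfl
  | succ n ih =>
    obtain ⟨h, rfl⟩ : ∃ l, h = l + 1 := ⟨h - 1, by omega⟩
    rw [gaussBinom_succ_succ, ih (by omega), ih (by omega)]
    simp

lemma gaussBinom_self (n : ℕ) : gaussBinom n n = 1 := by
  induction n with
  | zero => rfl
  | succ n ih => rw [gaussBinom_succ_succ, gaussBinom_eq_zero (by omega), ih]; simp

/-- The second Pascal rule. -/
lemma gaussBinom_succ_succ' (u h : ℕ) :
    gaussBinom (h + u + 1) (h + 1) =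
      gaussBinom (h + u) (h + 1) + X ^ u * gaussBinom (h + u) h := by
  suffices H : ∀ n u h, n = h + u → gaussBinom (n + 1) (h + 1) =
      gaussBinom n (h + 1) + X ^ u * gaussBinom n h from H _ u h rfl
  intro n
  induction n with
  | zero =>
    intro u h e
    obtain ⟨rfl, rfl⟩ : h = 0 ∧ u = 0 := by omega
    simp [gaussBinom]
  | succ n ih =>
    intro u h e
    rw [gaussBinom_succ_succ (n + 1) h]
    cases h with
    | zero =>
      obtain rfl : u = n + 1 := by omega
      have h1 := ih n 0 (by omega)
      rw [gaussBinom_succ_succ n 0] at h1 ⊢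
      simp only [gaussBinom_zero_right] at h1 ⊢
      linear_combination X * h1
    | succ h =>
      cases u with
      | zero => rw [gaussBinom_eq_zero (n := n + 1) (h := h + 1 + 1) (by omega)]; simp
      | succ u =>
        have h1 := ih u (h + 1) (by omega)
        have h2 := ih (u + 1) h (by omega)
        linear_combination X ^ (h + 2) * h1 + h2 - gaussBinom_succ_succ n (h + 1) -
          X ^ (u + 1) * gaussBinom_succ_succ n h

lemma one_sub_mul_gaussBinom (u h : ℕ) :
    (1 - X ^ (h + 1)) * gaussBinom (h + u) (h + 1) = (1 - X ^ u) * gaussBinom (h + u) h := by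
  linear_combination gaussBinom_succ_succ (h + u) h - gaussBinom_succ_succ' u h

/-- The polynomial `(1 - X) (1 - X ^ 2) ⋯ (1 - X ^ h)`. -/
def qPoch (h : ℕ) : Polynomial ℤ := ∏ l ∈ Finset.range h, (1 - X ^ (l + 1))

lemma qPoch_succ (h : ℕ) : qPoch (h + 1) = qPoch h * (1 - X ^ (h + 1)) :=
  Finset.prod_range_succ _ _

/-- The polynomial counting, up to the change of variable `q ↦ q⁻¹` and a power of `q`,
the `i × j` matrices of rank `h` over a field with `q` elements. -/
def rankPoly (i j h : ℕ) : Polynomial ℤ :=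
  gaussBinom i h * gaussBinom j h * qPoch h * X ^ ((i - h) * (j - h))

lemma rankPoly_comm (i j h : ℕ) : rankPoly i j h = rankPoly j i h := by
  unfold rankPoly
  rw [mul_comm (i - h)]
  ring

lemma rankPoly_eq_zero {i j h : ℕ} (hi : i < h) : rankPoly i j h = 0 := by
  simp [rankPoly, gaussBinom_eq_zero hi]

lemma rankPoly_eq_zero' {i j h : ℕ} (hj : j < h) : rankPoly i j h = 0 := by
  simp [rankPoly, gaussBinom_eq_zero hj]

lemma rankPoly_zero_right (i j : ℕ) : rankPoly i j 0 = X ^ (i * j) := by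
  simp [rankPoly, gaussBinom_zero_right, qPoch]

lemma one_sub_mul_rankPoly_succ (u v h : ℕ) :
    (1 - X ^ (h + 1)) * rankPoly (h + u + 1) (h + v + 1) (h + 1) =
      (1 - X ^ (u + 1)) * (1 - X ^ (v + 1)) * gaussBinom (h + u + 1) h *
        gaussBinom (h + v + 1) h * qPoch h * X ^ (u * v) := by
  have h1 := one_sub_mul_gaussBinom (u + 1) h
  have h2 := one_sub_mul_gaussBinom (v + 1) h
  simp only [← add_assoc] at h1 h2
  unfold rankPoly
  rw [qPoch_succ, show h + u + 1 - (h + 1) = u by omega, show h + v + 1 - (h + 1) = v by omega]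
  linear_combination (qPoch h * X ^ (u * v) * (1 - X ^ (h + 1)) *
    gaussBinom (h + v + 1) (h + 1)) * h1 + (qPoch h * X ^ (u * v) * (1 - X ^ (u + 1)) *
    gaussBinom (h + u + 1) h) * h2

lemma rankPoly_rec_of_eq (j h : ℕ) :
    X * rankPoly (h + 1) (j + 1) (h + 1) =
      X ^ (h + 2) * rankPoly (h + 1) j (h + 1) + X * (1 - X ^ (h + 1)) * rankPoly h j h := by
  simp only [rankPoly, gaussBinom_self, qPoch_succ, Nat.sub_self, zero_mul, pow_zero]
  rw [gaussBinom_succ_succ]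
  ring

lemma rankPoly_rec (i j h : ℕ) :
    X * rankPoly (i + 1) (j + 1) h =
      (1 - X ^ (h + 1)) * rankPoly (i + 1) (j + 1) (h + 1) +
        X ^ (h + 1) * (rankPoly i (j + 1) h + rankPoly (i + 1) j h) - rankPoly i j h +
        X * (1 - X ^ h) * rankPoly i j (h - 1) := by
  wlog hij : i ≤ j generalizing i j
  · have := this j i (by omega)
    rw [rankPoly_comm (i + 1) (j + 1), rankPoly_comm (i + 1) (j + 1), rankPoly_comm i (j + 1),
      rankPoly_comm (i + 1) j, rankPoly_comm i j, rankPoly_comm i j, this]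
    ring
  cases h with
  | zero =>
    have := one_sub_mul_rankPoly_succ i j 0
    simp only [zero_add, gaussBinom_zero_right, qPoch, Finset.range_zero, Finset.prod_empty] at this
    simp only [rankPoly_zero_right, zero_add, this]
    ring
  | succ h =>
    rw [Nat.add_sub_cancel]
    rcases lt_trichotomy i h with hi | rfl | hi
    · rw [rankPoly_eq_zero (i := i + 1) (h := h + 1) (by omega),
        rankPoly_eq_zero (i := i + 1) (h := h + 1 + 1) (by omega),
        rankPoly_eq_zero (i := i) (h := h + 1) (by omega),
        rankPoly_eq_zero (i := i + 1) (h := h + 1) (by omega),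
        rankPoly_eq_zero (i := i) (h := h + 1) (by omega),
        rankPoly_eq_zero (i := i) (h := h) (by omega)]
      simp
    · rw [rankPoly_rec_of_eq j i,
        rankPoly_eq_zero (i := i + 1) (h := i + 1 + 1) (by omega),
        rankPoly_eq_zero (i := i) (h := i + 1) (by omega),
        rankPoly_eq_zero (i := i) (h := i + 1) (by omega)]
      ring
    · obtain ⟨u, rfl⟩ := Nat.exists_eq_add_of_lt hi
      obtain ⟨v, rfl⟩ := Nat.exists_eq_add_of_lt (lt_of_lt_of_le hi hij)
      have h1 := one_sub_mul_rankPoly_succ u v (h + 1)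
      rw [show h + 1 + u + 1 = h + u + 1 + 1 by omega,
        show h + 1 + v + 1 = h + v + 1 + 1 by omega] at h1
      rw [h1]
      have a1 := gaussBinom_succ_succ (h + u + 1) h
      have a2 := gaussBinom_succ_succ' (u + 1) h
      have b1 := gaussBinom_succ_succ (h + v + 1) h
      have b2 := gaussBinom_succ_succ' (v + 1) h
      simp only [← add_assoc] at a2 b2
      simp only [rankPoly, qPoch_succ]
      rw [show h + u + 1 + 1 - (h + 1) = u + 1 by omega, show h + u + 1 - (h + 1) = u by omega,
        show h + v + 1 + 1 - (h + 1) = v + 1 by omega, show h + v + 1 - (h + 1) = v by omega,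
        show h + u + 1 - h = u + 1 by omega, show h + v + 1 - h = v + 1 by omega]
      generalize gaussBinom (h + u + 1 + 1) (h + 1) = p1 at *
      generalize gaussBinom (h + v + 1 + 1) (h + 1) = r1 at *
      generalize gaussBinom (h + u + 1) (h + 1) = p at *
      generalize gaussBinom (h + v + 1) (h + 1) = r at *
      generalize gaussBinom (h + u + 1) h = p0 at *
      generalize gaussBinom (h + v + 1) h = r0 at *
      have key : X ^ (u + 1) * X ^ (v + 1) * (p1 * r1) =
          (1 - X ^ (u + 1)) * (1 - X ^ (v + 1)) * (p1 * r1) +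
            X ^ (h + 1) * (X ^ (u + 1) * p * r1 + X ^ (v + 1) * p1 * r) - p * r +
            X ^ (u + 1) * X ^ (v + 1) * (p0 * r0) := by
        have e1 : X ^ (u + 1) * p0 = p1 - p := by linear_combination -a2
        have e2 : X ^ (v + 1) * r0 = r1 - r := by linear_combination -b2
        have e3 : X ^ (h + 1) * X ^ (u + 1) * p = p + (X ^ (u + 1) - 1) * p1 := by
          linear_combination a2 - X ^ (u + 1) * a1
        have e4 : X ^ (h + 1) * X ^ (v + 1) * r = r + (X ^ (v + 1) - 1) * r1 := by
          linear_combination b2 - X ^ (v + 1) * b1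
        linear_combination -(X ^ (v + 1) * r0) * e1 - (p1 - p) * e2 - r1 * e3 - p1 * e4
      linear_combination qPoch h * (1 - X ^ (h + 1)) * X ^ (u * v) * key

/-- Alternating sum of `rankPoly` over the pairs `(i, j)` with `i + j = n`. -/
def altRankSum (n h : ℕ) : Polynomial ℤ :=
  ∑ p ∈ Finset.HasAntidiagonal.antidiagonal n, (-1) ^ p.1 * rankPoly p.1 p.2 h

lemma altRankSum_eq_zero {k h : ℕ} (hk : k < h) : altRankSum (2 * k) h = 0 := by
  refine Finset.sum_eq_zero fun p hp => ?_
  rw [Finset.HasAntidiagonal.mem_antidiagonal] at hp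
  rcases lt_or_ge p.1 h with h1 | h1
  · rw [rankPoly_eq_zero h1, mul_zero]
  · rw [rankPoly_eq_zero' (by omega), mul_zero]

lemma rankPoly_zero_left_eq (m n h : ℕ) : rankPoly 0 m h = rankPoly n 0 h := by
  cases h with
  | zero => simp [rankPoly_zero_right]
  | succ h => rw [rankPoly_eq_zero (by omega), rankPoly_eq_zero' (by omega)]

lemma pow_mul_rankPoly_zero_left (m h : ℕ) : X ^ h * rankPoly 0 m h = rankPoly 0 m h := by
  cases h with
  | zero => simp
  | succ h => rw [rankPoly_eq_zero (by omega), mul_zero]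

lemma altRankSum_rec (k h : ℕ) :
    X * altRankSum (2 * k + 2) h =
      (1 - X ^ (h + 1)) * altRankSum (2 * k + 2) (h + 1) + altRankSum (2 * k) h -
        X * (1 - X ^ h) * altRankSum (2 * k) (h - 1) := by
  set f : ℕ → Polynomial ℤ := fun h =>
    ∑ p ∈ Finset.HasAntidiagonal.antidiagonal (2 * k), (-1) ^ p.1 * rankPoly (p.1 + 1) (p.2 + 1) h
  have hsplit : ∀ h, altRankSum (2 * k + 2) h = 2 * rankPoly 0 0 h - f h := by
    intro h
    unfold altRankSum
    rw [Finset.Nat.sum_antidiagonal_succ, Finset.Nat.sum_antidiagonal_succ',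
      ← rankPoly_zero_left_eq 0, rankPoly_zero_left_eq _ 0]
    simp only [f, pow_succ, mul_neg, mul_one, neg_mul, Finset.sum_neg_distrib, pow_mul, pow_zero]
    norm_num
    ring
  have hmid : ∑ p ∈ Finset.HasAntidiagonal.antidiagonal (2 * k),
      (-1) ^ p.1 * (rankPoly p.1 (p.2 + 1) h + rankPoly (p.1 + 1) p.2 h) =
        2 * rankPoly 0 0 h := by
    have h1 := Finset.Nat.sum_antidiagonal_succ (n := 2 * k)
      (f := fun p => (-1) ^ p.1 * rankPoly p.1 p.2 h)
    rw [Finset.Nat.sum_antidiagonal_succ'] at h1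
    simp only [pow_succ, pow_mul, pow_zero] at h1
    rw [← rankPoly_zero_left_eq 0, rankPoly_zero_left_eq _ 0,
      ← rankPoly_zero_left_eq 0] at h1
    simp only [mul_add, Finset.sum_add_distrib]
    simp only [mul_neg, mul_one, neg_mul, Finset.sum_neg_distrib] at h1
    norm_num at h1
    linear_combination h1 + rankPoly_zero_left_eq (2 * k + 1) 0 h
  have hf : X * f h = (1 - X ^ (h + 1)) * f (h + 1) + X ^ (h + 1) * (2 * rankPoly 0 0 h) -
      altRankSum (2 * k) h + X * (1 - X ^ h) * altRankSum (2 * k) (h - 1) := by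
    rw [← hmid]
    simp only [f, altRankSum, Finset.mul_sum]
    rw [← Finset.sum_add_distrib, ← Finset.sum_sub_distrib, ← Finset.sum_add_distrib]
    refine Finset.sum_congr rfl fun p _ => ?_
    linear_combination (-1) ^ p.1 * rankPoly_rec p.1 p.2 h
  rw [hsplit, hsplit, rankPoly_eq_zero (i := 0) (h := h + 1) (by omega)]
  linear_combination -hf - 2 * X * pow_mul_rankPoly_zero_left 0 h

/-- Closed form for the weighted number of admissible paths of length `2 * k - h`
ending at height `h`. -/
def pathPoly (h k : ℕ) : Polynomial ℤ := (-1) ^ k * X ^ (k - h) * altRankSum (2 * k) h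

lemma pathPoly_eq_zero {h k : ℕ} (hk : k < h) : pathPoly h k = 0 := by
  rw [pathPoly, altRankSum_eq_zero hk, mul_zero]

lemma pathPoly_zero_zero : pathPoly 0 0 = 1 := by
  simp [pathPoly, altRankSum, rankPoly_zero_right]

lemma pathPoly_rec (h k : ℕ) :
    pathPoly h (k + 1) = (1 - X ^ h) * pathPoly (h - 1) k +
      (1 - X ^ (h + 1)) * pathPoly (h + 1) (k + 1) - pathPoly h k := by
  have hrec := altRankSum_rec k h
  rcases lt_trichotomy h (k + 1) with hk | rfl | hk
  · obtain ⟨u, rfl⟩ := Nat.exists_eq_add_of_le (Nat.lt_succ_iff.mp hk)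
    have hlow : (1 - X ^ h) * X ^ (h + u - (h - 1)) =
        ((1 - X ^ h) * X ^ (u + 1) : Polynomial ℤ) := by
      cases h with
      | zero => simp
      | succ h => rw [show h + 1 + u - (h + 1 - 1) = u + 1 by omega]
    simp only [pathPoly]
    rw [show h + u + 1 - h = u + 1 by omega, show h + u + 1 - (h + 1) = u by omega,
      show h + u - h = u by omega, mul_add 2 (h + u) 1, mul_one]
    linear_combination (-1) ^ (h + u + 1) * X ^ u * hrec -
      (-1) ^ (h + u) * altRankSum (2 * (h + u)) (h - 1) * hlow
  · rw [pathPoly_eq_zero (h := k + 1 + 1) (by omega), pathPoly_eq_zero (h := k + 1) (k := k) (by omega)]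
    rw [altRankSum_eq_zero (by omega), show 2 * k + 2 = 2 * (k + 1) by ring,
      altRankSum_eq_zero (h := k + 1 + 1) (by omega)] at hrec
    rw [Nat.add_sub_cancel] at hrec ⊢
    have : altRankSum (2 * (k + 1)) (k + 1) = -((1 - X ^ (k + 1)) * altRankSum (2 * k) k) := by
      apply mul_left_cancel₀ (Polynomial.X_ne_zero (R := ℤ))
      linear_combination hrec
    simp only [pathPoly, this, Nat.sub_self]
    ring
  · rw [pathPoly_eq_zero hk, pathPoly_eq_zero (by omega), pathPoly_eq_zero (by omega),
      pathPoly_eq_zero (by omega)]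
    simp

/-- The weight of step `i` of a weighted path. -/
def stepWeight {m : ℕ} (s w : Fin m → Bool) (i : Fin m) : Polynomial ℤ :=
  if w i then 1 else -(X ^ ((pathHeight s (i : ℕ)).toNat + (if s i then 1 else 0)))

/-- An admissible weighted path, staying nonnegative, and ending at height `h`. -/
def IsAdmissible {m : ℕ} (s w : Fin m → Bool) (h : ℤ) : Prop :=
  (∀ i : Fin m, 0 ≤ pathHeight s ((i : ℕ) + 1)) ∧ pathHeight s m = h ∧ NoDouble11 s w

/-- The last step is an up step of weight `1`. -/
def EndsUpOne {m : ℕ} (s w : Fin m → Bool) : Prop :=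
  ∃ i : Fin m, (i : ℕ) + 1 = m ∧ s i = true ∧ w i = true

/-- Weighted count of admissible paths of length `m` ending at height `h`. -/
def pathSum (m : ℕ) (h : ℤ) : Polynomial ℤ :=
  ∑ s : Fin m → Bool, ∑ w : Fin m → Bool,
    if IsAdmissible s w h then ∏ i, stepWeight s w i else 0

/-- Weighted count of the admissible paths whose last step is an up step of weight `1`. -/
def pathSumUpOne (m : ℕ) (h : ℤ) : Polynomial ℤ :=
  ∑ s : Fin m → Bool, ∑ w : Fin m → Bool,
    if IsAdmissible s w h ∧ EndsUpOne s w then ∏ i, stepWeight s w i else 0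

lemma sum_snoc {M : Type*} [AddCommMonoid M] {m : ℕ} (f : (Fin (m + 1) → Bool) → M) :
    ∑ s, f s = ∑ s : Fin m → Bool, (f (Fin.snoc s true) + f (Fin.snoc s false)) := by
  rw [← (Fin.snocEquiv (fun _ : Fin (m + 1) => Bool)).sum_comp, Fintype.sum_prod_type,
    Fintype.sum_bool, ← Finset.sum_add_distrib]
  rfl

lemma pathHeight_snoc_of_le {m : ℕ} (s : Fin m → Bool) (b : Bool) {i : ℕ} (hi : i ≤ m) :
    pathHeight (Fin.snoc s b : Fin (m + 1) → Bool) i = pathHeight s i := by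
  simp [pathHeight, Fin.sum_univ_castSucc, hi]

lemma pathHeight_snoc {m : ℕ} (s : Fin m → Bool) (b : Bool) :
    pathHeight (Fin.snoc s b : Fin (m + 1) → Bool) (m + 1) = pathHeight s m + stepVal b := by
  simp [pathHeight, Fin.sum_univ_castSucc]

lemma noDouble11_snoc {m : ℕ} (s w : Fin m → Bool) (b c : Bool) :
    NoDouble11 (Fin.snoc s b : Fin (m + 1) → Bool) (Fin.snoc w c) ↔
      NoDouble11 s w ∧ ¬(EndsUpOne s w ∧ b = false ∧ c = true) := by
  constructor
  · intro H
    refine ⟨fun i j hij => ?_, ?_⟩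
    · simpa using H i.castSucc j.castSucc (by simpa using hij)
    · rintro ⟨⟨i, hi, hs, hw⟩, hb, hc⟩
      exact H i.castSucc (Fin.last m) (by simp [hi]) (by simp [hs, hw, hb, hc])
  · rintro ⟨H, H'⟩ i j hij
    induction j using Fin.lastCases with
    | last =>
      induction i using Fin.lastCases with
      | last => simp at hij
      | cast i =>
        rintro ⟨h1, h2, h3, h4⟩
        simp only [Fin.snoc_castSucc, Fin.snoc_last] at h1 h2 h3 h4
        exact H' ⟨⟨i, by simpa using hij.symm, h1, h3⟩, h2, h4⟩
    | cast j =>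
      induction i using Fin.lastCases with
      | last =>
        simp only [Fin.val_castSucc, Fin.val_last] at hij
        omega
      | cast i => simpa using H i j (by simpa using hij)

lemma endsUpOne_snoc {m : ℕ} (s w : Fin m → Bool) (b c : Bool) :
    EndsUpOne (Fin.snoc s b : Fin (m + 1) → Bool) (Fin.snoc w c) ↔ b = true ∧ c = true := by
  constructor
  · rintro ⟨i, hi, hs, hw⟩
    obtain rfl : i = Fin.last m := Fin.ext (by simpa using hi)
    simpa using And.intro hs hw
  · rintro ⟨hb, hc⟩
    exact ⟨Fin.last m, by simp [hb, hc]⟩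

lemma isAdmissible_snoc {m : ℕ} (s w : Fin m → Bool) (b c : Bool) {h : ℤ} (hh : 0 ≤ h) :
    IsAdmissible (Fin.snoc s b : Fin (m + 1) → Bool) (Fin.snoc w c) h ↔
      IsAdmissible s w (h - stepVal b) ∧ ¬(EndsUpOne s w ∧ b = false ∧ c = true) := by
  unfold IsAdmissible
  rw [noDouble11_snoc, pathHeight_snoc, Fin.forall_fin_succ']
  have : ∀ i : Fin m, pathHeight (Fin.snoc s b : Fin (m + 1) → Bool) ((i : ℕ) + 1) =
      pathHeight s ((i : ℕ) + 1) := fun i => pathHeight_snoc_of_le s b (by omega)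
  simp only [Fin.val_castSucc, Fin.val_last, this, pathHeight_snoc, eq_sub_iff_add_eq]
  constructor
  · tauto
  · rintro ⟨⟨h1, h2, h3⟩, h4⟩
    exact ⟨⟨h1, h2 ▸ hh⟩, h2, h3, h4⟩

lemma prod_stepWeight_snoc {m : ℕ} (s w : Fin m → Bool) (b c : Bool) :
    ∏ i, stepWeight (Fin.snoc s b : Fin (m + 1) → Bool) (Fin.snoc w c) i =
      (∏ i, stepWeight s w i) *
        if c then 1 else -(X ^ ((pathHeight s m).toNat + (if b then 1 else 0))) := by
  rw [Fin.prod_univ_castSucc]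
  congr 1
  · refine Finset.prod_congr rfl fun i _ => ?_
    simp [stepWeight, pathHeight_snoc_of_le s b i.2.le]
  · simp [stepWeight, pathHeight_snoc_of_le s b le_rfl]

lemma IsAdmissible.nonneg {m : ℕ} {s w : Fin m → Bool} {h : ℤ} (H : IsAdmissible s w h) :
    0 ≤ h := by
  obtain ⟨h1, h2, -⟩ := H
  cases m with
  | zero => simp [← h2, pathHeight]
  | succ m => simpa [← h2] using h1 (Fin.last m)

lemma pathSum_of_neg (m : ℕ) {h : ℤ} (hh : h < 0) : pathSum m h = 0 :=
  Finset.sum_eq_zero fun _ _ => Finset.sum_eq_zero fun _ _ =>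
    if_neg fun H => absurd H.nonneg (not_le.mpr hh)

lemma pathSum_zero_left (h : ℤ) : pathSum 0 h = if h = 0 then 1 else 0 := by
  simp [pathSum, IsAdmissible, NoDouble11, pathHeight, eq_comm (a := h)]

lemma pathSumUpOne_zero_left (h : ℤ) : pathSumUpOne 0 h = 0 := by
  simp [pathSumUpOne, EndsUpOne]

lemma pathSumUpOne_succ (m h : ℕ) : pathSumUpOne (m + 1) (h + 1) = pathSum m h := by
  have hh : (0 : ℤ) ≤ h + 1 := by positivity
  unfold pathSumUpOne pathSum
  rw [sum_snoc]
  refine Finset.sum_congr rfl fun s _ => ?_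
  rw [sum_snoc, sum_snoc, ← Finset.sum_add_distrib]
  refine Finset.sum_congr rfl fun w _ => ?_
  simp only [isAdmissible_snoc _ _ _ _ hh, endsUpOne_snoc, prod_stepWeight_snoc]
  simp [stepVal]

lemma pathSum_succ (m h : ℕ) :
    pathSum (m + 1) h = (1 - X ^ h) * pathSum m ((h - 1 : ℕ) : ℤ) +
      (1 - X ^ (h + 1)) * pathSum m (h + 1) - pathSumUpOne m (h + 1) := by
  have hlow : (1 - X ^ h) * pathSum m ((h - 1 : ℕ) : ℤ) = (1 - X ^ h) * pathSum m ((h : ℤ) - 1) := by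
    cases h with
    | zero => simp
    | succ h => simp
  rw [hlow]
  unfold pathSumUpOne pathSum
  rw [sum_snoc]
  simp only [Finset.mul_sum]
  rw [← Finset.sum_add_distrib, ← Finset.sum_sub_distrib]
  refine Finset.sum_congr rfl fun s _ => ?_
  rw [sum_snoc, sum_snoc, ← Finset.sum_add_distrib, ← Finset.sum_add_distrib,
    ← Finset.sum_sub_distrib]
  refine Finset.sum_congr rfl fun w _ => ?_
  simp only [isAdmissible_snoc _ _ _ _ (Int.natCast_nonneg h), prod_stepWeight_snoc]
  have hup : (if IsAdmissible s w ((h : ℤ) - 1) then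
      (∏ i, stepWeight s w i) * -(X ^ ((pathHeight s m).toNat + 1)) else 0) =
      if IsAdmissible s w ((h : ℤ) - 1) then (∏ i, stepWeight s w i) * -(X ^ h) else 0 := by
    refine if_ctx_congr Iff.rfl (fun H => ?_) fun _ => rfl
    have h1 := H.nonneg
    rw [H.2.1, show ((h : ℤ) - 1).toNat + 1 = h by omega]
  have hdown : (if IsAdmissible s w ((h : ℤ) + 1) then
      (∏ i, stepWeight s w i) * -(X ^ (pathHeight s m).toNat) else 0) =
      if IsAdmissible s w ((h : ℤ) + 1) then (∏ i, stepWeight s w i) * -(X ^ (h + 1)) else 0 := by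
    refine if_ctx_congr Iff.rfl (fun H => ?_) fun _ => rfl
    rw [H.2.1, show ((h : ℤ) + 1).toNat = h + 1 by omega]
  simp only [stepVal, if_true, Bool.false_eq_true, if_false, sub_neg_eq_add, add_zero, mul_one,
    and_true, and_false, not_false_eq_true, Bool.true_eq_false, hup, hdown]
  by_cases h1 : IsAdmissible s w ((h : ℤ) - 1) <;> by_cases h2 : IsAdmissible s w ((h : ℤ) + 1) <;>
    by_cases h3 : EndsUpOne s w <;> simp [h1, h2, h3] <;> ring

lemma pathSum_eq_pathPoly (m h k : ℕ) (hk : m + h = 2 * k) : pathSum m h = pathPoly h k := by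
  induction m using Nat.strong_induction_on generalizing h k with
  | _ m ih =>
    rcases m with _ | m
    · rw [pathSum_zero_left]
      rcases k with _ | k
      · obtain rfl : h = 0 := by omega
        simp [pathPoly_zero_zero]
      · rw [if_neg (by omega), pathPoly_eq_zero (by omega)]
    · obtain ⟨k, rfl⟩ : ∃ l, k = l + 1 := ⟨k - 1, by omega⟩
      have h1 : (1 - X ^ h) * pathSum m ((h - 1 : ℕ) : ℤ) =
          (1 - X ^ h) * pathPoly (h - 1) k := by
        cases h with
        | zero => simp
        | succ h => rw [ih m (by omega) _ k (by omega)]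
      have h2 := ih m (by omega) (h + 1) (k + 1) (by omega)
      have h3 : pathSumUpOne m (h + 1) = pathPoly h k := by
        rcases m with _ | m
        · rw [pathSumUpOne_zero_left, pathPoly_eq_zero (by omega)]
        · rw [pathSumUpOne_succ, ih m (by omega) h k (by omega)]
      push_cast at h2
      rw [pathSum_succ, h1, h2, h3, ← pathPoly_rec]

theorem stmt15 (k : ℕ) :
    (∑ j ∈ Finset.range (2*k+1), (-1 : Polynomial ℤ)^(j+k) * X ^ (j * (2*k-j) + k)) =
      ∑ p ∈ (Finset.univ : Finset ((Fin (2*k) → Bool) × (Fin (2*k) → Bool))).filter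
          (fun p => IsDyck p.1 ∧ NoDouble11 p.1 p.2),
        ∏ i : Fin (2*k),
          (if p.2 i then (1 : Polynomial ℤ)
           else -(X ^ ((pathHeight p.1 (i : ℕ)).toNat + (if p.1 i then 1 else 0)))) := by
  have hR := pathSum_eq_pathPoly (2 * k) 0 k (by omega)
  have hL : pathPoly 0 k =
      ∑ j ∈ Finset.range (2*k+1), (-1 : Polynomial ℤ)^(j+k) * X ^ (j * (2*k-j) + k) := by
    unfold pathPoly altRankSum
    rw [Finset.Nat.sum_antidiagonal_eq_sum_range_succ_mk, Finset.mul_sum]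
    refine Finset.sum_congr rfl fun j _ => ?_
    simp only [rankPoly_zero_right, Nat.sub_zero]
    ring
  rw [← hL, ← hR, Finset.sum_filter, Fintype.sum_prod_type]
  simp only [pathSum, IsAdmissible, IsDyck, stepWeight, Nat.cast_zero, and_assoc]
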